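/- Let G be a group with generating set X such that the Cayley graph Γ(G,X) is hyperbolic, and let H_1, H_2 be subgroups each hyperbolically embedded in (G,X). Then for each R ≥ 0 there exists C ≥ 0 such that the set of elements s ∈ G satisfying both d_X(1,s) ≤ R and the existence of a, b ∈ H_1 ∩ N_R(sH_2) with d_X(a,b) ≥ C is finite. -/

import Mathlib

open Pointwise

section BasicDefs

variable {G : Type*} [Group G]

/-- The word length of `g` with respect to the generating set `S`
(words use letters from `S ∪ S⁻¹`). -/
noncomputable def wordLength (S : Set G) (g : G) : ℕ :=
  sInf {n : ℕ | ∃ l : List G, l.length = n ∧ (∀ x ∈ l, x ∈ S ∨ x⁻¹ ∈ S) ∧ l.prod = g}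

/-- The word metric on `G` with respect to the generating set `S`. -/
noncomputable def wordDist (S : Set G) (g h : G) : ℝ :=
  (wordLength S (g⁻¹ * h) : ℝ)

/-- The closed `r`-neighborhood of a subset `A` with respect to the word metric `d_S`. -/
def nbhd (S : Set G) (r : ℝ) (A : Set G) : Set G :=
  {g : G | ∃ a ∈ A, wordDist S g a ≤ r}

/-- The distance between two subsets: the infimum of distances between their elements. -/
noncomputable def setDist (S : Set G) (A B : Set G) : ℝ :=
  sInf {r : ℝ | ∃ a ∈ A, ∃ b ∈ B, r = wordDist S a b}

/-- The conjugate subgroup `H^g = g H g⁻¹`. -/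
def conjSub (g : G) (H : Subgroup G) : Subgroup G :=
  H.map (MulAut.conj g).toMonoidHom

end BasicDefs

/-- `γ` restricted to `{0, …, n}` is a `(K, ε)`-quasigeodesic for the distance function `d`. -/
def IsQuasigeodesic {α : Type*} (d : α → α → ℝ) (K ε : ℝ) (n : ℕ) (γ : ℕ → α) : Prop :=
  ∀ i j : ℕ, i ≤ n → j ≤ n →
    (1 / K) * |(i : ℝ) - (j : ℝ)| - ε ≤ d (γ i) (γ j) ∧
      d (γ i) (γ j) ≤ K * |(i : ℝ) - (j : ℝ)| + ε

/-- `γ` restricted to `{0, …, n}` is a geodesic for the distance function `d`. -/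
def IsGeodesic {α : Type*} (d : α → α → ℝ) (n : ℕ) (γ : ℕ → α) : Prop :=
  ∀ i j : ℕ, i ≤ n → j ≤ n → d (γ i) (γ j) = |(i : ℝ) - (j : ℝ)|

/-- The path `γ` (on `{0, …, n}`) is `f`-stable: every `(K, ε)`-quasigeodesic with endpoints
on `γ` stays in the `f K ε`-neighborhood of `γ`. -/
def IsStablePath {α : Type*} (d : α → α → ℝ) (f : ℝ → ℝ → ℝ) (n : ℕ) (γ : ℕ → α) : Prop :=
  ∀ K ε : ℝ, 1 ≤ K → 0 ≤ ε → ∀ (m : ℕ) (η : ℕ → α),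
    IsQuasigeodesic d K ε m η →
    (∃ i ≤ n, η 0 = γ i) → (∃ i ≤ n, η m = γ i) →
    ∀ j ≤ m, ∃ i ≤ n, d (η j) (γ i) ≤ f K ε

/-- The Gromov product `⟨x, y⟩_w` with respect to a distance function `d`. -/
noncomputable def gromovProd {α : Type*} (d : α → α → ℝ) (w x y : α) : ℝ :=
  (d w x + d w y - d x y) / 2

/-- Gromov hyperbolicity of a distance function, via the four-point condition. -/
def IsHyperbolicDist {α : Type*} (d : α → α → ℝ) : Prop :=
  ∃ δ : ℝ, 0 ≤ δ ∧ ∀ w x y z : α,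
    min (gromovProd d w x y) (gromovProd d w y z) - δ ≤ gromovProd d w x z

section GroupDefs

variable {G : Type*} [Group G]

/-- `H` is a stable subgroup of `(G, d_S)` with stability function `f`: `H` has a finite
generating set `T` such that the inclusion `(H, d_T) → (G, d_S)` is a quasi-isometric
embedding sending every `d_T`-geodesic to an `f`-stable quasigeodesic of `(G, d_S)`. -/
def IsStableSubgroupWith (S : Set G) (H : Subgroup G) (f : ℝ → ℝ → ℝ) : Prop :=
  ∃ T : Set H, T.Finite ∧ Subgroup.closure T = ⊤ ∧
    (∃ μ c : ℝ, 1 ≤ μ ∧ 0 ≤ c ∧ ∀ h₁ h₂ : H,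
      (1 / μ) * wordDist T h₁ h₂ - c ≤ wordDist S (h₁ : G) (h₂ : G) ∧
        wordDist S (h₁ : G) (h₂ : G) ≤ μ * wordDist T h₁ h₂ + c) ∧
    ∀ (n : ℕ) (γ : ℕ → H), IsGeodesic (wordDist T) n γ →
      (∃ K ε : ℝ, 1 ≤ K ∧ 0 ≤ ε ∧
        IsQuasigeodesic (wordDist S) K ε n (fun i => (γ i : G))) ∧
      IsStablePath (wordDist S) f n (fun i => (γ i : G))

/-- `H` is a stable subgroup of `(G, d_S)`. -/
def IsStableSubgroup (S : Set G) (H : Subgroup G) : Prop :=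
  ∃ f : ℝ → ℝ → ℝ, IsStableSubgroupWith S H f

/-- The family `Q` of subgroups is hyperbolically embedded in `(G, X)`:
(Q1) geometric separation, (Q2) finite generation, (Q3) uniform quasi-isometric embedding. -/
def IsHypEmbFamily {G : Type*} [Group G] {ι : Type*} (X : Set G) (Q : ι → Subgroup G) : Prop :=
  (∀ ε : ℝ, 0 < ε → ∃ R : ℝ, ∀ (g : G) (i j : ι),
      (∃ a ∈ (Q i : Set G) ∩ nbhd X ε (g • (Q j : Set G)),
        ∃ b ∈ (Q i : Set G) ∩ nbhd X ε (g • (Q j : Set G)), R ≤ wordDist X a b) →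
      i = j ∧ g ∈ Q i) ∧
  ∃ Y : ι → Set G, (∀ i, (Y i).Finite ∧ Y i ⊆ (Q i : Set G) ∧ Subgroup.closure (Y i) = Q i) ∧
    ∃ μ c : ℝ, 1 ≤ μ ∧ 0 ≤ c ∧ ∀ i : ι, ∀ h ∈ Q i,
      (wordLength (Y i) h : ℝ) ≤ μ * (wordLength X h : ℝ) + c

/-- The subset `H` of `G` satisfies the WPD condition in `(G, X)`. -/
def WPDSet (X : Set G) (H : Set G) : Prop :=
  ∀ ε : ℝ, 0 < ε → ∃ N : ℝ, 0 < N ∧ ∀ h₁ h₂ : G, h₁ ∈ H → h₂ ∈ H →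
    N < wordDist X h₁ h₂ →
    {g : G | wordDist X h₁ (g * h₁) < ε ∧ wordDist X h₂ (g * h₂) < ε}.Finite

/-- A quasimorphism on `G`. -/
def IsQuasimorphism (q : G → ℝ) : Prop :=
  ∃ D : ℝ, 0 ≤ D ∧ ∀ x y : G, |q (x * y) - q x - q y| ≤ D

/-- A homogeneous quasimorphism on `G`. -/
def IsHomogeneousQM (q : G → ℝ) : Prop :=
  IsQuasimorphism q ∧ ∀ (x : G) (n : ℕ), q (x ^ n) = (n : ℝ) * q x

/-- `H` is a quasiconvex subgroup of `(G, d_S)`: every geodesic with endpoints in `H`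
lies in a uniformly bounded neighborhood of `H`. -/
def IsQuasiconvex (S : Set G) (H : Subgroup G) : Prop :=
  ∃ C : ℝ, 0 ≤ C ∧ ∀ (n : ℕ) (γ : ℕ → G), IsGeodesic (wordDist S) n γ →
    γ 0 ∈ H → γ n ∈ H → ∀ i ≤ n, ∃ h ∈ H, wordDist S (γ i) h ≤ C

end GroupDefs


section Helpers

variable {G : Type*} [Group G]

lemma wl_le (S : Set G) (l : List G) (hl : ∀ x ∈ l, x ∈ S ∨ x⁻¹ ∈ S) :
    wordLength S l.prod ≤ l.length :=
  Nat.sInf_le ⟨l, rfl, hl, rfl⟩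

lemma exists_word (S : Set G) (g : G) (hg : g ∈ Subgroup.closure S) :
    ∃ l : List G, (∀ x ∈ l, x ∈ S ∨ x⁻¹ ∈ S) ∧ l.prod = g := by
  rw [← Subgroup.mem_toSubmonoid, Subgroup.closure_toSubmonoid] at hg
  have h := Submonoid.exists_list_of_mem_closure hg
  simpa using h

lemma exists_min_word (S : Set G) (g : G) (hg : g ∈ Subgroup.closure S) :
    ∃ l : List G, l.length = wordLength S g ∧ (∀ x ∈ l, x ∈ S ∨ x⁻¹ ∈ S) ∧ l.prod = g := by
  obtain ⟨l, h1, h2⟩ := exists_word S g hg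
  exact Nat.sInf_mem (s := {n : ℕ | ∃ l : List G, l.length = n ∧
    (∀ x ∈ l, x ∈ S ∨ x⁻¹ ∈ S) ∧ l.prod = g}) ⟨l.length, l, rfl, h1, h2⟩

lemma wl_one (S : Set G) : wordLength S (1 : G) = 0 := by
  have := wl_le S [] (by simp)
  simpa using this

lemma wl_mul {S : Set G} (hS : Subgroup.closure S = ⊤) (g h : G) :
    wordLength S (g * h) ≤ wordLength S g + wordLength S h := by
  obtain ⟨l, h1, h2, h3⟩ := exists_min_word S g (by simp [hS])
  obtain ⟨m, k1, k2, k3⟩ := exists_min_word S h (by simp [hS])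
  rw [← h1, ← k1, ← h3, ← k3, ← List.prod_append, ← List.length_append]
  apply wl_le
  intro x hx
  rcases List.mem_append.1 hx with h | h
  · exact h2 x h
  · exact k2 x h

lemma wl_inv_le {S : Set G} (hS : Subgroup.closure S = ⊤) (g : G) :
    wordLength S g⁻¹ ≤ wordLength S g := by
  obtain ⟨l, h1, h2, h3⟩ := exists_min_word S g (by simp [hS])
  have := wl_le S (l.map (·⁻¹)).reverse (by
    intro x hx
    simp only [List.mem_reverse, List.mem_map] at hx
    obtain ⟨y, hy, rfl⟩ := hx
    rw [inv_inv]
    exact (h2 y hy).symm)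
  rw [← List.prod_inv_reverse, h3] at this
  simpa [h1] using this

lemma wd_nonneg (S : Set G) (g h : G) : 0 ≤ wordDist S g h := Nat.cast_nonneg _

lemma wd_self (S : Set G) (g : G) : wordDist S g g = 0 := by simp [wordDist, wl_one]

lemma wd_comm {S : Set G} (hS : Subgroup.closure S = ⊤) (g h : G) :
    wordDist S g h = wordDist S h g := by
  unfold wordDist
  norm_cast
  apply le_antisymm
  · simpa using wl_inv_le hS (h⁻¹ * g)
  · simpa using wl_inv_le hS (g⁻¹ * h)

lemma wd_tri {S : Set G} (hS : Subgroup.closure S = ⊤) (g k h : G) :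
    wordDist S g h ≤ wordDist S g k + wordDist S k h := by
  unfold wordDist
  norm_cast
  have := wl_mul hS (g⁻¹ * k) (k⁻¹ * h)
  simpa [mul_assoc] using this

lemma wd_left (S : Set G) (s g h : G) : wordDist S (s * g) (s * h) = wordDist S g h := by
  simp [wordDist, mul_assoc]

/-- points on geodesics -/
lemma wd_exists_between {S : Set G} (hS : Subgroup.closure S = ⊤) (x y : G) (m : ℕ)
    (hm : (m : ℝ) ≤ wordDist S x y) :
    ∃ w, wordDist S x w = m ∧ wordDist S x w + wordDist S w y = wordDist S x y := by
  obtain ⟨l, h1, h2, h3⟩ := exists_min_word S (x⁻¹ * y) (by simp [hS])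
  have hm' : m ≤ l.length := by
    unfold wordDist at hm; rw [h1]; exact_mod_cast hm
  have a1 : wordLength S (l.take m).prod ≤ m :=
    (wl_le S _ fun z hz => h2 z (List.mem_of_mem_take hz)).trans (by simp)
  have a2 : wordLength S (l.drop m).prod ≤ l.length - m :=
    (wl_le S _ fun z hz => h2 z (List.mem_of_mem_drop hz)).trans (by simp)
  have e : (l.take m).prod * (l.drop m).prod = x⁻¹ * y := by
    rw [List.prod_take_mul_prod_drop, h3]
  have a3 := wl_mul hS (l.take m).prod (l.drop m).prod
  rw [e, ← h1] at a3
  have e1 : wordLength S (x⁻¹ * (x * (l.take m).prod)) = m := by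
    rw [inv_mul_cancel_left]; omega
  have e2 : wordLength S ((x * (l.take m).prod)⁻¹ * y) = l.length - m := by
    have : (x * (l.take m).prod)⁻¹ * y = (l.drop m).prod := by
      rw [mul_inv_rev, mul_assoc, ← e, inv_mul_cancel_left]
    rw [this]; omega
  refine ⟨x * (l.take m).prod, ?_, ?_⟩
  · unfold wordDist; rw [e1]
  · unfold wordDist; rw [e1, e2, ← h1]; norm_cast; omega

lemma finite_words (Y : Set G) (hY : Y.Finite) (m : ℕ) :
    ∃ F : Set G, F.Finite ∧ ∀ l : List G, l.length ≤ m →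
      (∀ x ∈ l, x ∈ Y ∨ x⁻¹ ∈ Y) → l.prod ∈ F := by
  induction m with
  | zero =>
    refine ⟨{1}, Set.finite_singleton _, ?_⟩
    intro l hl _
    have : l = [] := List.length_eq_zero_iff.1 (by omega)
    simp [this]
  | succ m ih =>
    obtain ⟨F, hF, h⟩ := ih
    refine ⟨insert 1 ((Y ∪ Y⁻¹) * F), ((hY.union hY.inv).mul hF).insert 1, ?_⟩
    intro l hl hx
    cases l with
    | nil => simp
    | cons a t =>
      right
      rw [List.prod_cons]
      apply Set.mul_mem_mul
      · have := hx a (by simp)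
        simpa using this
      · exact h t (by simpa using hl) fun x hx' => hx x (by simp [hx'])

lemma finite_ball (X Y : Set G) (H : Subgroup G) (hY : Y.Finite) (hc : Subgroup.closure Y = H)
    (μ c : ℝ) (hμ : 1 ≤ μ)
    (hq : ∀ h ∈ H, (wordLength Y h : ℝ) ≤ μ * (wordLength X h : ℝ) + c) (r : ℝ) :
    {h : G | h ∈ H ∧ wordDist X 1 h ≤ r}.Finite := by
  obtain ⟨F, hF, h⟩ := finite_words Y hY ⌈μ * r + c⌉₊
  refine hF.subset ?_
  rintro g ⟨hg, hr⟩
  obtain ⟨l, h1, h2, h3⟩ := exists_min_word Y g (hc ▸ hg)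
  rw [← h3]
  refine h l ?_ h2
  have := hq g hg
  have hr' : (wordLength X g : ℝ) ≤ r := by simpa [wordDist] using hr
  have h4 : (wordLength Y g : ℝ) ≤ ⌈μ * r + c⌉₊ := by
    refine le_trans ?_ (Nat.le_ceil _)
    nlinarith
  rw [h1]
  exact_mod_cast h4

lemma chain_lemma {d : G → G → ℝ} {δ : ℝ}
    (hd : ∀ w x y z : G, min (gromovProd d w x y) (gromovProd d w y z) - δ ≤ gromovProd d w x z)
    (Y : Set G) (H : Subgroup G) (hYH : Y ⊆ H) (w : G) (B : ℝ)
    (h0 : ∀ h ∈ H, B ≤ gromovProd d w h h)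
    (h1 : ∀ h ∈ H, ∀ y, y ∈ Y ∨ y⁻¹ ∈ Y → B ≤ gromovProd d w h (h * y)) (k : ℕ) :
    ∀ l : List G, l.length ≤ 2 ^ k → (∀ x ∈ l, x ∈ Y ∨ x⁻¹ ∈ Y) → ∀ h ∈ H,
      B - k * δ ≤ gromovProd d w h (h * l.prod) := by
  induction k with
  | zero =>
    intro l hl hx h hh
    match l, hl, hx with
    | [], _, _ => simpa using h0 h hh
    | [a], _, hx => simpa using h1 h hh a (hx a (by simp))
    | a :: b :: t, hl, _ => simp at hl
  | succ k ih =>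
    intro l hl hx h hh
    have hp : (2:ℕ) ^ (k + 1) = 2 ^ k + 2 ^ k := by ring
    have hx1 : ∀ x ∈ l.take (2 ^ k), x ∈ Y ∨ x⁻¹ ∈ Y := fun x h => hx x (List.mem_of_mem_take h)
    have hx2 : ∀ x ∈ l.drop (2 ^ k), x ∈ Y ∨ x⁻¹ ∈ Y := fun x h => hx x (List.mem_of_mem_drop h)
    have hm : (l.take (2 ^ k)).prod ∈ H := by
      apply H.list_prod_mem
      intro x hx'
      rcases hx1 x hx' with h | h
      · exact hYH h
      · exact (H.inv_mem_iff).1 (hYH h)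
    have a1 := ih (l.take (2 ^ k)) (by simp) hx1 h hh
    have a2 := ih (l.drop (2 ^ k)) (by simp; omega) hx2 _ (H.mul_mem hh hm)
    rw [mul_assoc, List.prod_take_mul_prod_drop] at a2
    have := hd w h (h * (l.take (2 ^ k)).prod) (h * l.prod)
    have := le_min a1 a2
    push_cast
    linarith

lemma growth (A δ K c : ℝ) :
    ∃ D0 : ℕ, ∀ D : ℕ, (∀ k : ℕ, K * D + c ≤ 2 ^ k → (D : ℝ) ≤ A + k * δ) → D ≤ D0 := by
  obtain ⟨m, hm⟩ := exists_nat_ge (4 * δ + 1)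
  obtain ⟨m', hm'⟩ : ∃ m' : ℕ, m' = m + 1 := ⟨_, rfl⟩
  obtain ⟨B, hB⟩ := exists_nat_ge (|K| * m' + |c|)
  obtain ⟨A', hA⟩ := exists_nat_ge (2 * A + 1)
  refine ⟨m' * B + A', fun D h => ?_⟩
  by_contra! hD
  set j := D / m' with hj
  have hmpos : 0 < m' := by omega
  have j1 : m' * j ≤ D := Nat.mul_div_le D m'
  have j2 : D < m' * (j + 1) := Nat.lt_mul_div_succ D hmpos
  have j3 : B ≤ j := by
    rw [hj, Nat.le_div_iff_mul_le hmpos]; nlinarith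
  have e1 : (j + 1 : ℝ) ^ 2 ≤ 2 ^ (2 * j) := by
    have : j + 1 ≤ 2 ^ j := Nat.lt_two_pow_self
    have h3 : (j + 1 : ℝ) ≤ 2 ^ j := by exact_mod_cast this
    calc (j + 1 : ℝ) ^ 2 ≤ (2 ^ j) ^ 2 := by gcongr
      _ = 2 ^ (2 * j) := by rw [← pow_mul, mul_comm]
  have j1' : (m' : ℝ) * j ≤ D := by exact_mod_cast j1
  have j2' : (D : ℝ) ≤ m' * (j + 1) := by exact_mod_cast j2.le
  have j3' : (B : ℝ) ≤ j := by exact_mod_cast j3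
  have jn : (0 : ℝ) ≤ j := Nat.cast_nonneg _
  have e2 : K * D + c ≤ 2 ^ (2 * j) := by
    refine le_trans ?_ e1
    have k1 : K * D ≤ |K| * (m' * (j + 1)) := by
      calc K * D ≤ |K| * D := by gcongr; exact le_abs_self K
        _ ≤ _ := by gcongr
    have k2 : c ≤ |c| * (j + 1) := by
      have := le_abs_self c
      nlinarith [abs_nonneg c]
    have k3 : (|K| * m' + |c|) * (j + 1) ≤ (j + 1) * (j + 1) := by
      exact mul_le_mul_of_nonneg_right (by linarith) (by linarith)
    nlinarith
  have := h _ e2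
  push_cast at this
  have hm2 : (m' : ℝ) = m + 1 := by exact_mod_cast hm'
  have k4 : 4 * δ * j ≤ m' * j := by gcongr; linarith
  have k5 : (A' : ℝ) < D := by
    have : A' < D := by nlinarith
    exact_mod_cast this
  nlinarith

/-- Quasiconvexity of a quasi-isometrically embedded subgroup. -/
lemma quasiconvex_aux (X : Set G) (hX : Subgroup.closure X = ⊤)
    (hhyp : IsHyperbolicDist (wordDist X)) (H : Subgroup G) (Y : Set G)
    (hY : Y.Finite) (hYH : Y ⊆ (H : Set G)) (hc : Subgroup.closure Y = H) (μ c : ℝ) (hμ : 1 ≤ μ)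
    (hq : ∀ h ∈ H, (wordLength Y h : ℝ) ≤ μ * (wordLength X h : ℝ) + c) (R : ℝ) :
    ∃ D0 : ℕ, ∀ x y w : G, wordDist X x w + wordDist X w y = wordDist X x y →
      (∃ h ∈ H, wordDist X x h ≤ R) → (∃ h ∈ H, wordDist X y h ≤ R) →
      ∃ h ∈ H, wordDist X w h ≤ D0 := by
  classical
  obtain ⟨δ, hδ, hd⟩ := hhyp
  obtain ⟨M, hM⟩ : ∃ M : ℝ, ∀ y ∈ Y, wordDist X 1 y ≤ M := by
    obtain ⟨M, hM⟩ := (hY.image (fun y => wordDist X 1 y)).bddAbove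
    exact ⟨M, fun y hy => hM ⟨y, hy, rfl⟩⟩
  have hM' : ∀ y, y ∈ Y ∨ y⁻¹ ∈ Y → wordDist X 1 y ≤ |M| := by
    rintro y (h | h)
    · exact (hM y h).trans (le_abs_self M)
    · have := hM _ h
      rw [← wd_left X y, mul_one, mul_inv_cancel, wd_comm hX] at this
      exact this.trans (le_abs_self M)
  obtain ⟨D0, hD0⟩ := growth (|R| + |M| + 2 * δ) δ (6 * μ) c
  -- distance to H
  have hf : ∀ v : G, ∃ n : ℕ, (∃ h ∈ H, wordDist X v h = n) ∧
      ∀ h ∈ H, (n : ℝ) ≤ wordDist X v h := by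
    intro v
    have hex : ∃ n : ℕ, ∃ h ∈ H, wordDist X v h = n := ⟨_, 1, H.one_mem, rfl⟩
    refine ⟨Nat.find hex, Nat.find_spec hex, fun h hh => ?_⟩
    have := Nat.find_min' hex (m := wordLength X (v⁻¹ * h)) ⟨h, hh, rfl⟩
    exact Nat.cast_le.2 this
  choose f hf1 hf2 using hf
  refine ⟨D0, fun x y w hw hx hy => ?_⟩
  -- the maximal point
  obtain ⟨w0, hw0, hmax⟩ : ∃ w0, wordDist X x w0 + wordDist X w0 y = wordDist X x y ∧
      ∀ v, wordDist X x v + wordDist X v y = wordDist X x y → f v ≤ f w0 := by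
    let S : Set ℕ := {n | ∃ v, wordDist X x v + wordDist X v y = wordDist X x y ∧ f v = n}
    have hb : BddAbove S := by
      obtain ⟨b, hb⟩ := exists_nat_ge (wordDist X x y + R)
      refine ⟨b, ?_⟩
      rintro n ⟨v, hv, rfl⟩
      obtain ⟨h, hh, hr⟩ := hx
      have h1 := hf2 v h hh
      have h2 := wd_tri hX v x h
      rw [wd_comm hX v x] at h2
      have h3 := wd_nonneg X v y
      have : (f v : ℝ) ≤ b := by linarith
      exact_mod_cast this
    obtain ⟨w0, h1, h2⟩ := Nat.sSup_mem (s := S) ⟨f w, w, hw, rfl⟩ hb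
    exact ⟨w0, h1, fun v hv => h2 ▸ le_csSup hb ⟨v, hv, rfl⟩⟩
  set D := f w0 with hD
  have key : D ≤ D0 := by
    apply hD0
    intro k hk
    have side : ∀ p : G, (∃ h ∈ H, wordDist X p h ≤ R) →
        (∀ v, wordDist X p v + wordDist X v w0 = wordDist X p w0 → f v ≤ D) →
        ∃ v, ∃ v' ∈ H, wordDist X p v + wordDist X v w0 = wordDist X p w0 ∧
          wordDist X v w0 ≤ 2 * D ∧ wordDist X v v' ≤ D ∧
          D - |R| ≤ gromovProd (wordDist X) w0 v v' := by
      intro p hp hv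
      by_cases hcase : (((2 * D : ℕ)) : ℝ) ≤ wordDist X w0 p
      · obtain ⟨v, e1, e2⟩ := wd_exists_between hX w0 p (2 * D) hcase
        rw [wd_comm hX w0 v, wd_comm hX v p, wd_comm hX w0 p, add_comm] at e2
        rw [wd_comm hX w0 v] at e1
        push_cast at e1
        obtain ⟨v', hv', e3⟩ := hf1 v
        have h4 : (f v : ℝ) ≤ D := by exact_mod_cast hv v e2
        refine ⟨v, v', hv', e2, e1.le, e3.le.trans h4, ?_⟩
        unfold gromovProd
        rw [wd_comm hX w0 v]
        have := hf2 w0 v' hv'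
        have := abs_nonneg R
        linarith
      · push Not at hcase
        have e2 : wordDist X p p + wordDist X p w0 = wordDist X p w0 := by rw [wd_self]; ring
        obtain ⟨v', hv', e3⟩ := hf1 p
        have h4 : (f p : ℝ) ≤ D := by exact_mod_cast hv p e2
        obtain ⟨h, hh, hr⟩ := hp
        have h5 := hf2 p h hh
        refine ⟨p, v', hv', e2, ?_, e3.le.trans h4, ?_⟩
        · rw [wd_comm hX]; push_cast at hcase; exact hcase.le
        · unfold gromovProd
          have := hf2 w0 v' hv'
          have := le_abs_self R
          have := wd_tri hX w0 p v'
          linarith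
    obtain ⟨y1, y', hy', a1, a2, a3, a4⟩ := side x hx (by
      intro v hv
      apply hmax
      have := wd_tri hX v w0 y
      have := wd_tri hX x v y
      linarith)
    obtain ⟨z1, z', hz', b1, b2, b3, b4⟩ := side y hy (by
      intro v hv
      apply hmax
      have := wd_tri hX x w0 v
      have := wd_tri hX x v y
      rw [wd_comm hX w0 v] at *
      rw [wd_comm hX y v, wd_comm hX y w0] at hv
      linarith)
    have g0 : gromovProd (wordDist X) w0 y1 z1 ≤ 0 := by
      unfold gromovProd
      have h1 := wd_tri hX x y1 y
      have h2 := wd_tri hX y1 z1 y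
      rw [wd_comm hX y z1, wd_comm hX y w0] at b1
      rw [wd_comm hX w0 y1, wd_comm hX w0 z1]
      linarith
    obtain ⟨l, l1, l2, l3⟩ := exists_min_word Y (y'⁻¹ * z')
      (hc ▸ H.mul_mem (H.inv_mem hy') hz')
    have hlen : l.length ≤ 2 ^ k := by
      have h1 := hq _ (H.mul_mem (H.inv_mem hy') hz')
      have h2 : wordDist X y' z' ≤ 6 * D := by
        have t1 := wd_tri hX y' y1 z'
        have t2 := wd_tri hX y1 w0 z'
        have t3 := wd_tri hX w0 z1 z'
        rw [wd_comm hX y' y1] at t1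
        rw [wd_comm hX w0 z1] at t3
        linarith
      unfold wordDist at h2
      have : (wordLength Y (y'⁻¹ * z') : ℝ) ≤ 2 ^ k := by nlinarith
      rw [l1]
      exact_mod_cast this
    have ch := chain_lemma hd Y H hYH w0 (D - |M|)
      (by
        intro h hh
        unfold gromovProd
        rw [wd_self]
        have := hf2 w0 h hh
        have := abs_nonneg M
        linarith)
      (by
        intro h hh u hu
        unfold gromovProd
        have huH : u ∈ H := by
          rcases hu with hu | hu
          · exact hYH hu
          · exact (H.inv_mem_iff).1 (hYH hu)
        have h1 := hf2 w0 h hh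
        have h2 := hf2 w0 (h * u) (H.mul_mem hh huH)
        have h3 := hM' u hu
        rw [← wd_left X h, mul_one] at h3
        have := abs_nonneg M
        linarith) k l hlen l2 y' hy'
    rw [l3, mul_inv_cancel_left] at ch
    have q1 := hd w0 y1 y' z1
    have q2 := hd w0 y' z' z1
    have b5 : gromovProd (wordDist X) w0 z' z1 = gromovProd (wordDist X) w0 z1 z' := by
      unfold gromovProd; rw [wd_comm hX z' z1]; ring
    rw [← b5] at b4
    have hR := abs_nonneg R
    have hMn := abs_nonneg M
    have hkδ : 0 ≤ (k : ℝ) * δ := by positivity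
    have q3 : (D : ℝ) - |R| - |M| - k * δ ≤ min (gromovProd (wordDist X) w0 y' z')
      (gromovProd (wordDist X) w0 z' z1) := le_min (by linarith) (by linarith)
    have q4 : (D : ℝ) - |R| - |M| - k * δ - δ ≤ min (gromovProd (wordDist X) w0 y1 y')
      (gromovProd (wordDist X) w0 y' z1) := le_min (by linarith) (by linarith)
    linarith
  obtain ⟨h, hh, e⟩ := hf1 w
  refine ⟨h, hh, ?_⟩
  rw [e]
  exact_mod_cast (hmax w hw).trans key

end Helpers

/-- **Finiteness of double cosets with large coarse intersection.** -/
theorem finiteness_double_cosets {G : Type*} [Group G] (X : Set G)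
    (hXgen : Subgroup.closure X = ⊤) (hhyp : IsHyperbolicDist (wordDist X))
    (H₁ H₂ : Subgroup G)
    (he₁ : IsHypEmbFamily X (fun _ : Fin 1 => H₁))
    (he₂ : IsHypEmbFamily X (fun _ : Fin 1 => H₂)) :
    ∀ R : ℝ, 0 ≤ R → ∃ C : ℝ, 0 ≤ C ∧
      {s : G | wordDist X 1 s ≤ R ∧
        ∃ a ∈ (H₁ : Set G) ∩ nbhd X R (s • (H₂ : Set G)),
        ∃ b ∈ (H₁ : Set G) ∩ nbhd X R (s • (H₂ : Set G)),
          C ≤ wordDist X a b}.Finite := by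
  intro R hR
  obtain ⟨-, Y₁, hY₁, μ₁, c₁, hμ₁, -, hq₁⟩ := he₁
  obtain ⟨hsep, Y₂, hY₂, μ₂, c₂, hμ₂, -, hq₂⟩ := he₂
  obtain ⟨f₁, s₁, g₁⟩ := hY₁ 0
  obtain ⟨f₂, s₂, g₂⟩ := hY₂ 0
  obtain ⟨D₁, hD₁⟩ := quasiconvex_aux X hXgen hhyp H₁ (Y₁ 0) f₁ s₁ g₁ μ₁ c₁ hμ₁ (hq₁ 0) R
  obtain ⟨D₂, hD₂⟩ := quasiconvex_aux X hXgen hhyp H₂ (Y₂ 0) f₂ s₂ g₂ μ₂ c₂ hμ₂ (hq₂ 0) R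
  have fin₁ := finite_ball X (Y₁ 0) H₁ f₁ g₁ μ₁ c₁ hμ₁ (hq₁ 0)
  have fin₂ := finite_ball X (Y₂ 0) H₂ f₂ g₂ μ₂ c₂ hμ₂ (hq₂ 0)
  have hD₁n : (0 : ℝ) ≤ D₁ := Nat.cast_nonneg _
  have hD₂n : (0 : ℝ) ≤ D₂ := Nat.cast_nonneg _
  obtain ⟨R₀, hR₀⟩ := hsep (2 * (D₁ + D₂) + 2 * R + 1) (by positivity)
  obtain ⟨L, hL⟩ := exists_nat_ge (R₀ + D₂ + R)
  refine ⟨2 * L, by positivity, ?_⟩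
  -- the finiteness of each piece
  have piece : ∀ a h : G, h ∈ H₂ → R₀ ≤ wordDist X 1 h →
      {s : G | wordDist X 1 s ≤ R ∧ wordDist X a (s * h) ≤ D₁ + D₂}.Finite := by
    intro a h hh hlong
    rcases Set.eq_empty_or_nonempty
      {s : G | wordDist X 1 s ≤ R ∧ wordDist X a (s * h) ≤ D₁ + D₂} with he | ⟨t, ht1, ht2⟩
    · rw [he]; exact Set.finite_empty
    · refine ((fin₂ (2 * R)).image (fun g => t * g)).subset ?_
      rintro s ⟨hs1, hs2⟩
      have dts : wordDist X 1 (t⁻¹ * s) ≤ 2 * R := by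
        rw [← wd_left X t, mul_one, mul_inv_cancel_left]
        have := wd_tri hXgen t 1 s
        rw [wd_comm hXgen t 1] at this
        linarith
      have dth : wordDist X h (t⁻¹ * s * h) ≤ 2 * (D₁ + D₂) := by
        rw [← wd_left X t, mul_assoc, mul_inv_cancel_left]
        have := wd_tri hXgen (t * h) a (s * h)
        rw [wd_comm hXgen (t * h) a] at this
        linarith
      refine ⟨t⁻¹ * s, ⟨?_, dts⟩, by simp⟩
      refine (hR₀ (t⁻¹ * s) 0 0 ⟨1, ⟨H₂.one_mem, t⁻¹ * s, ?_, by linarith⟩,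
        h, ⟨hh, t⁻¹ * s * h, ?_, by linarith⟩, hlong⟩).2
      · exact ⟨1, H₂.one_mem, by simp⟩
      · exact ⟨h, hh, by simp⟩
  refine ((fin₁ (L + D₁)).biUnion (t := fun a => ⋃ h ∈ {h : G | h ∈ {h : G | h ∈ H₂ ∧
    wordDist X 1 h ≤ L + D₂ + R} ∧ R₀ ≤ wordDist X 1 h},
    {s : G | wordDist X 1 s ≤ R ∧ wordDist X a (s * h) ≤ D₁ + D₂}) ?_).subset ?_
  · intro a _
    refine Set.Finite.biUnion ((fin₂ (L + D₂ + R)).subset fun h hh => hh.1) ?_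
    intro h hh
    exact piece a h hh.1.1 hh.2
  · rintro s ⟨hs, a, ha, b, hb, hab⟩
    obtain ⟨a, ⟨haH, v, hv, hav⟩, haL⟩ :
        ∃ a ∈ (H₁ : Set G) ∩ nbhd X R (s • (H₂ : Set G)), (L : ℝ) ≤ wordDist X 1 a := by
      by_cases h : (L : ℝ) ≤ wordDist X 1 a
      · exact ⟨a, ha, h⟩
      · refine ⟨b, hb, ?_⟩
        have := wd_tri hXgen a 1 b
        rw [wd_comm hXgen a 1] at this
        linarith
    obtain ⟨k, hk, rfl⟩ := hv
    simp only [smul_eq_mul] at hav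
    obtain ⟨w, hw1, hw2⟩ := wd_exists_between hXgen 1 a L haL
    obtain ⟨a', ha', e1⟩ := hD₁ 1 a w hw2 ⟨1, H₁.one_mem, by rw [wd_self]; exact hR⟩
      ⟨a, haH, by rw [wd_self]; exact hR⟩
    obtain ⟨h', hh', e2⟩ := hD₂ (s⁻¹ * 1) (s⁻¹ * a) (s⁻¹ * w) (by simpa only [wd_left] using hw2)
      ⟨1, H₂.one_mem, by
        rw [← wd_left X s, mul_inv_cancel_left, mul_one]; exact hs⟩
      ⟨k, hk, by rw [← wd_left X s, mul_inv_cancel_left]; exact hav⟩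
    rw [← wd_left X s, mul_inv_cancel_left] at e2
    have e3 : wordDist X 1 h' = wordDist X s (s * h') := by
      rw [← wd_left X s, mul_one]
    have t1 := wd_tri hXgen 1 s w
    have t2 := wd_tri hXgen s (s * h') w
    have t3 := wd_tri hXgen s 1 (s * h')
    have t4 := wd_tri hXgen 1 w (s * h')
    have t5 := wd_tri hXgen 1 w a'
    have t6 := wd_tri hXgen a' w (s * h')
    rw [wd_comm hXgen (s * h') w] at t2
    rw [wd_comm hXgen s 1] at t3
    rw [wd_comm hXgen a' w] at t6
    simp only [Set.mem_iUnion]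
    exact ⟨a', ⟨ha', by linarith⟩, h', ⟨⟨hh', by linarith⟩, by linarith⟩, hs, by linarith⟩
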